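/- arXiv:2412.08044 — 2 statements merged into one kernel-verified Lean document; each statement's English description precedes it below -/
import Mathlib

section
/- For every n ≥ 0 and every k ∈ ℝ, ∫_ℝ e^{i k x} Ĥ_n(x) dx = i^n √(2π) Ĥ_n(k); equivalently, the Fourier transform satisfies 𝓕[Ĥ_n](k) = (−i)^n Ĥ_n(k), i.e. each Hermite function is an eigenfunction of the Fourier transform with eigenvalue (−i)^n. -/
open MeasureTheory Real
noncomputable section
def physHermite : ℕ → ℝ → ℝ
  | 0 => fun _ => 1
  | 1 => fun x => 2 * x
  | n + 2 => fun x => 2 * x * physHermite (n + 1) x - 2 * (n + 1) * physHermite n x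
def hermiteFun (n : ℕ) (x : ℝ) : ℝ :=
  (Real.sqrt (Real.sqrt Real.pi))⁻¹ * (Real.sqrt (2 ^ n * Nat.factorial n))⁻¹ *
    Real.exp (-x ^ 2 / 2) * physHermite n x
/-- Fourier transform `𝓕[u](k) = (2π)^{-1/2} ∫ u(x) e^{-ikx} dx`. -/
def FT (u : ℝ → ℂ) (k : ℝ) : ℂ :=
  (Real.sqrt (2 * Real.pi) : ℂ)⁻¹ * ∫ x : ℝ, u x * Complex.exp (-Complex.I * (k : ℂ) * (x : ℂ))

lemma physHermite_zero (x : ℝ) : physHermite 0 x = 1 := by simp [physHermite]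
lemma physHermite_one (x : ℝ) : physHermite 1 x = 2 * x := by simp [physHermite]
lemma physHermite_add_two (n : ℕ) (x : ℝ) : physHermite (n + 2) x =
    2 * x * physHermite (n + 1) x - 2 * (n + 1) * physHermite n x := by simp [physHermite]

lemma physHermite_hasDerivAt (n : ℕ) : ∀ x : ℝ,
    HasDerivAt (physHermite (n + 1)) (2 * (n + 1) * physHermite n x) x := by
  induction n using Nat.twoStepInduction with
  | zero =>
    intro x
    have h : physHermite (0 + 1) = fun x => 2 * x := by funext y; exact physHermite_one y
    rw [h, physHermite_zero]
    simpa using (hasDerivAt_id x).const_mul (2 : ℝ)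
  | one =>
    intro x
    have h : physHermite (1 + 1) = fun x => 2 * x * (2 * x) - 2 := by
      funext y; rw [physHermite_add_two 0 y, physHermite_one, physHermite_zero]; simp
    rw [h, physHermite_one]
    have h1 := (hasDerivAt_id x).const_mul (2 : ℝ)
    have h2 := (h1.mul h1).sub_const 2
    refine h2.congr_deriv ?_
    simp; ring
  | more n ih1 ih2 =>
    intro x
    have h : physHermite (n + 2 + 1) = fun x => 2 * x * physHermite (n + 1 + 1) x
        - 2 * ((n + 1 : ℕ) + 1) * physHermite (n + 1) x := by
      funext y; exact physHermite_add_two (n + 1) y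
    rw [h]
    have h1 := (hasDerivAt_id x).const_mul (2 : ℝ)
    have h2 := (h1.mul (ih2 x)).sub ((ih1 x).const_mul (2 * (((n + 1 : ℕ) : ℝ) + 1)))
    refine h2.congr_deriv ?_
    have e := physHermite_add_two n x
    rw [show n + 1 + 1 = n + 2 from rfl, e]
    simp only [id]
    push_cast
    ring

lemma physHermite_neg (n : ℕ) (x : ℝ) : physHermite n (-x) = (-1) ^ n * physHermite n x := by
  induction n using Nat.twoStepInduction with
  | zero => simp [physHermite_zero]
  | one => simp [physHermite_one]
  | more n ih1 ih2 =>
    rw [physHermite_add_two, physHermite_add_two, ih1, ih2]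
    ring

/-- The unnormalised Hermite function. -/
def hG (n : ℕ) (x : ℝ) : ℝ := Real.exp (-x ^ 2 / 2) * physHermite n x

lemma hG_hasDerivAt (n : ℕ) (x : ℝ) :
    HasDerivAt (hG (n + 1)) (-x * hG (n + 1) x + 2 * (n + 1) * hG n x) x := by
  have h1 : HasDerivAt (fun x : ℝ => -x ^ 2 / 2) (-x) x := by
    refine (((hasDerivAt_id x).pow 2).neg.div_const 2).congr_deriv ?_
    simp; ring
  refine (h1.exp.mul (physHermite_hasDerivAt n x)).congr_deriv ?_
  unfold hG
  ring

lemma hG_zero_hasDerivAt (x : ℝ) : HasDerivAt (hG 0) (-x * hG 0 x) x := by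
  have h1 : HasDerivAt (fun x : ℝ => -x ^ 2 / 2) (-x) x := by
    refine (((hasDerivAt_id x).pow 2).neg.div_const 2).congr_deriv ?_
    simp; ring
  have h : hG 0 = fun x => Real.exp (-x ^ 2 / 2) := by
    funext y; simp [hG, physHermite_zero]
  rw [h]
  refine h1.exp.congr_deriv ?_
  ring

lemma hG_integrable (n : ℕ) : ∀ m : ℕ, Integrable (fun x : ℝ => x ^ m * hG n x) := by
  have base : ∀ m : ℕ, Integrable (fun x : ℝ => x ^ m * Real.exp (-x ^ 2 / 2)) := by
    intro m
    have h := integrable_rpow_mul_exp_neg_mul_sq (b := 1 / 2) (by norm_num) (s := m)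
      (by have : (0 : ℝ) ≤ m := Nat.cast_nonneg m
          linarith)
    refine h.congr (Filter.Eventually.of_forall fun x => ?_)
    simp only [Real.rpow_natCast]
    congr 2
    ring
  induction n using Nat.twoStepInduction with
  | zero => intro m; simpa [hG, physHermite_zero] using base m
  | one =>
    intro m
    refine ((base (m + 1)).const_mul 2).congr (Filter.Eventually.of_forall fun x => ?_)
    simp only [hG, physHermite_one]
    ring
  | more n ih1 ih2 =>
    intro m
    refine (((ih2 (m + 1)).const_mul 2).sub ((ih1 m).const_mul (2 * ((n : ℝ) + 1)))).congr
      (Filter.Eventually.of_forall fun x => ?_)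
    simp only [hG, physHermite_add_two, Pi.sub_apply]
    ring

lemma integrable_cexp_mul (k : ℝ) {f : ℝ → ℝ} (hf : Integrable f) :
    Integrable (fun x : ℝ => Complex.exp (Complex.I * (k : ℂ) * (x : ℂ)) * (f x : ℂ)) := by
  refine hf.ofReal.bdd_mul (c := 1) ?_ (Filter.Eventually.of_forall fun x => ?_)
  · exact Continuous.aestronglyMeasurable (by fun_prop)
  · rw [show Complex.I * (k : ℂ) * (x : ℂ) = ((k * x : ℝ) : ℂ) * Complex.I by push_cast; ring,
      Complex.norm_exp_ofReal_mul_I]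

/-- Integration by parts. -/
lemma cexp_parts (k : ℝ) {f f' : ℝ → ℝ} (hd : ∀ x, HasDerivAt f (f' x) x)
    (hf : Integrable f) (hf' : Integrable f') :
    ∫ x : ℝ, Complex.exp (Complex.I * (k : ℂ) * (x : ℂ)) * (f' x : ℂ) =
      -(Complex.I * k) * ∫ x : ℝ, Complex.exp (Complex.I * (k : ℂ) * (x : ℂ)) * (f x : ℂ) := by
  have i1 := integrable_cexp_mul k hf
  have i2 := integrable_cexp_mul k hf'
  have key := integral_eq_zero_of_hasDerivAt_of_integrable
    (f := fun x : ℝ => Complex.exp (Complex.I * (k : ℂ) * (x : ℂ)) * (f x : ℂ))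
    (f' := fun x : ℝ => (Complex.I * k) * (Complex.exp (Complex.I * (k : ℂ) * (x : ℂ)) * (f x : ℂ))
      + Complex.exp (Complex.I * (k : ℂ) * (x : ℂ)) * (f' x : ℂ)) ?_ ((i1.const_mul _).add i2) i1
  · rw [integral_add (i1.const_mul _) i2, integral_const_mul] at key
    linear_combination key
  · intro x
    have h1 : HasDerivAt (fun x : ℝ => Complex.I * (k : ℂ) * (x : ℂ)) (Complex.I * k) x := by
      simpa using (Complex.ofRealCLM.hasDerivAt (x := x)).const_mul (Complex.I * (k : ℂ))
    refine (h1.cexp.mul (hd x).ofReal_comp).congr_deriv ?_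
    ring

lemma hG_fourier (k : ℝ) (n : ℕ) :
    (∫ x : ℝ, Complex.exp (Complex.I * (k : ℂ) * (x : ℂ)) * (hG n x : ℂ))
      = Complex.I ^ n * (Real.sqrt (2 * Real.pi) : ℂ) * (hG n k : ℂ) := by
  have int0 : ∀ n, Integrable (hG n) := fun n => by simpa using hG_integrable n 0
  have int1 : ∀ n, Integrable (fun x => -x * hG n x) := fun n => by
    simpa using (hG_integrable n 1).neg
  have zero : (∫ x : ℝ, Complex.exp (Complex.I * (k : ℂ) * (x : ℂ)) * (hG 0 x : ℂ))
      = Complex.I ^ 0 * (Real.sqrt (2 * Real.pi) : ℂ) * (hG 0 k : ℂ) := by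
    have h := fourierIntegral_gaussian (b := 1 / 2) (by norm_num) (k : ℂ)
    have e : (fun x : ℝ => Complex.exp (Complex.I * (k : ℂ) * (x : ℂ)) * (hG 0 x : ℂ)) =
        fun x : ℝ => Complex.exp (Complex.I * (k : ℂ) * (x : ℂ)) *
          Complex.exp (-(1 / 2) * (x : ℂ) ^ 2) := by
      funext x
      simp only [hG, physHermite_zero]
      push_cast
      rw [mul_one]
      congr 2
      ring
    rw [e, h]
    have e2 : ((π : ℂ) / (1 / 2)) ^ (1 / 2 : ℂ) = (Real.sqrt (2 * Real.pi) : ℂ) := by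
      rw [Real.sqrt_eq_rpow, Complex.ofReal_cpow (by positivity)]
      push_cast
      congr 1
      ring
    rw [e2]
    simp only [hG, physHermite_zero]
    push_cast
    rw [mul_one, pow_zero, one_mul]
    congr 2
    ring
  induction n using Nat.twoStepInduction with
  | zero => exact zero
  | one =>
    have h := cexp_parts k hG_zero_hasDerivAt (int0 0) (int1 0)
    have e : (fun x : ℝ => Complex.exp (Complex.I * (k : ℂ) * (x : ℂ)) * (hG 1 x : ℂ)) =
        fun x : ℝ => (-2) * (Complex.exp (Complex.I * (k : ℂ) * (x : ℂ)) *
          ((-x * hG 0 x : ℝ) : ℂ)) := by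
      funext x
      simp only [hG, physHermite_zero, physHermite_one]
      push_cast
      ring
    rw [e, integral_const_mul, h, zero]
    simp only [hG, physHermite_zero, physHermite_one]
    push_cast
    ring
  | more n ih1 ih2 =>
    have iD : Integrable (fun x => -x * hG (n + 1) x + 2 * (n + 1) * hG n x) :=
      (int1 (n + 1)).add ((int0 n).const_mul _)
    have h := cexp_parts k (hG_hasDerivAt n) (int0 (n + 1)) iD
    have e : (fun x : ℝ => Complex.exp (Complex.I * (k : ℂ) * (x : ℂ)) * (hG (n + 2) x : ℂ)) =
        fun x : ℝ => (-2) * (Complex.exp (Complex.I * (k : ℂ) * (x : ℂ)) *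
          ((-x * hG (n + 1) x + 2 * (n + 1) * hG n x : ℝ) : ℂ)) + (2 * ((n : ℂ) + 1)) *
          (Complex.exp (Complex.I * (k : ℂ) * (x : ℂ)) * (hG n x : ℂ)) := by
      funext x
      simp only [hG, physHermite_add_two]
      push_cast
      ring
    rw [e, integral_add ((integrable_cexp_mul k iD).const_mul _)
      ((integrable_cexp_mul k (int0 n)).const_mul _), integral_const_mul, integral_const_mul,
      h, ih1, ih2]
    simp only [hG, physHermite_add_two]
    push_cast
    have hI : Complex.I ^ (n + 2) = -Complex.I ^ n := by rw [pow_add, Complex.I_sq]; ring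
    have hI1 : Complex.I * Complex.I ^ (n + 1) = -Complex.I ^ n := by
      rw [← hI]; ring
    rw [hI]
    linear_combination (2 * (k : ℂ) * (Real.sqrt (2 * Real.pi) : ℂ) *
      (Complex.exp (-(k : ℂ) ^ 2 / 2) * (physHermite (n + 1) k : ℂ))) * hI1

lemma hermiteFun_fourier_aux (n : ℕ) (k : ℝ) :
    (∫ x : ℝ, Complex.exp (Complex.I * (k : ℂ) * (x : ℂ)) * (hermiteFun n x : ℂ))
      = Complex.I ^ n * (Real.sqrt (2 * Real.pi) : ℂ) * (hermiteFun n k : ℂ) := by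
  have e : ∀ x, hermiteFun n x = ((Real.sqrt (Real.sqrt Real.pi))⁻¹ *
      (Real.sqrt (2 ^ n * Nat.factorial n))⁻¹) * hG n x := fun x => by
    unfold hermiteFun hG; ring
  simp only [e]
  generalize (Real.sqrt (Real.sqrt Real.pi))⁻¹ * (Real.sqrt (2 ^ n * Nat.factorial n))⁻¹ = c
  have e2 : (fun x : ℝ => Complex.exp (Complex.I * (k : ℂ) * (x : ℂ)) * ((c * hG n x : ℝ) : ℂ)) =
      fun x : ℝ => (c : ℂ) * (Complex.exp (Complex.I * (k : ℂ) * (x : ℂ)) * (hG n x : ℂ)) := by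
    funext x; push_cast; ring
  rw [e2, integral_const_mul, hG_fourier]
  push_cast
  ring

/-- Hermite functions are eigenfunctions of the Fourier transform with eigenvalue `(-i)^n`. -/
theorem hermiteFun_fourier_eigen (n : ℕ) (k : ℝ) :
    (∫ x : ℝ, Complex.exp (Complex.I * (k : ℂ) * (x : ℂ)) * (hermiteFun n x : ℂ))
      = Complex.I ^ n * (Real.sqrt (2 * Real.pi) : ℂ) * (hermiteFun n k : ℂ) ∧
    FT (fun x => (hermiteFun n x : ℂ)) k = (-Complex.I) ^ n * (hermiteFun n k : ℂ) := by
  refine ⟨hermiteFun_fourier_aux n k, ?_⟩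
  have h := hermiteFun_fourier_aux n (-k)
  have e : (fun x : ℝ => (hermiteFun n x : ℂ) * Complex.exp (-Complex.I * (k : ℂ) * (x : ℂ))) =
      fun x : ℝ => Complex.exp (Complex.I * ((-k : ℝ) : ℂ) * (x : ℂ)) * (hermiteFun n x : ℂ) := by
    funext x
    rw [mul_comm]
    congr 2
    push_cast
    ring
  have e2 : hermiteFun n (-k) = (-1) ^ n * hermiteFun n k := by
    unfold hermiteFun
    rw [physHermite_neg, neg_sq]
    ring
  have hs : (Real.sqrt (2 * Real.pi) : ℂ) ≠ 0 := by
    have : Real.sqrt (2 * Real.pi) ≠ 0 := by positivity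
    exact_mod_cast this
  unfold FT
  rw [e, h, e2, neg_pow Complex.I]
  push_cast
  field_simp
end
end

section
/- Let g_{k,s}(x) = e^{-(x−s)²/2 + i k x}, let M = B = √N/(2√2), and let Ω = {(k,s) : |k| ≤ B, |s| ≤ 2M}. Then there is an absolute constant C > 0 such that for all N ≥ 1, ∫_Ω ‖g_{k,s} − Π̂_N g_{k,s}‖² dk ds ≤ C N^{-1/2} e^{-N/8}, where ‖·‖ is the L²(ℝ) norm. -/
open MeasureTheory Real
noncomputable section
def L2norm {E : Type*} [NormedAddCommGroup E] (f : ℝ → E) : ℝ :=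
  Real.sqrt (∫ x : ℝ, ‖f x‖ ^ 2)
def scaledHermite (β : ℝ) (n : ℕ) (x : ℝ) : ℝ :=
  Real.sqrt β * hermiteFun n (β * x)
def hermiteProj (β : ℝ) (N : ℕ) (u : ℝ → ℂ) (x : ℝ) : ℂ :=
  ∑ n ∈ Finset.range (N + 1),
    (∫ y : ℝ, u y * (scaledHermite β n y : ℂ)) * (scaledHermite β n x : ℂ)
def gks (k s : ℝ) (x : ℝ) : ℂ :=
  Complex.exp (-((x : ℂ) - (s : ℂ)) ^ 2 / 2 + Complex.I * (k : ℂ) * (x : ℂ))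

/-- continuous with at most exponential growth -/
def Gr (f : ℝ → ℂ) : Prop :=
  Continuous f ∧ ∃ C a : ℝ, 0 ≤ C ∧ ∀ y, ‖f y‖ ≤ C * Real.exp (a * |y|)

lemma Gr.mul {f g : ℝ → ℂ} (hf : Gr f) (hg : Gr g) : Gr (fun y => f y * g y) := by
  obtain ⟨hf, C, a, hC, h1⟩ := hf
  obtain ⟨hg, D, b, hD, h2⟩ := hg
  refine ⟨hf.mul hg, C * D, a + b, by positivity, fun y => ?_⟩
  rw [norm_mul, add_mul, Real.exp_add]
  calc ‖f y‖ * ‖g y‖ ≤ (C * Real.exp (a * |y|)) * (D * Real.exp (b * |y|)) := by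
        gcongr
        · exact h1 y
        · exact h2 y
    _ = _ := by ring

lemma Gr.sub {f g : ℝ → ℂ} (hf : Gr f) (hg : Gr g) : Gr (fun y => f y - g y) := by
  obtain ⟨hf, C, a, hC, h1⟩ := hf
  obtain ⟨hg, D, b, hD, h2⟩ := hg
  refine ⟨hf.sub hg, C + D, max a b, by positivity, fun y => ?_⟩
  calc ‖f y - g y‖ ≤ ‖f y‖ + ‖g y‖ := norm_sub_le _ _
    _ ≤ C * Real.exp (a * |y|) + D * Real.exp (b * |y|) := add_le_add (h1 y) (h2 y)
    _ ≤ C * Real.exp (max a b * |y|) + D * Real.exp (max a b * |y|) := by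
        gcongr
        · exact le_max_left _ _
        · exact le_max_right _ _
    _ = _ := by ring

lemma Gr.const (c : ℂ) : Gr (fun _ => c) :=
  ⟨continuous_const, ‖c‖, 0, norm_nonneg _, fun y => by simp⟩

lemma Gr.id : Gr (fun y => (y : ℂ)) := by
  refine ⟨Complex.continuous_ofReal, 1, 1, zero_le_one, fun y => ?_⟩
  have := Real.add_one_le_exp |y|
  simp only [Complex.norm_real, Real.norm_eq_abs, one_mul]
  linarith

lemma Gr.cexp (z : ℂ) : Gr (fun y => Complex.exp (z * y)) := by
  refine ⟨by fun_prop, 1, ‖z‖, zero_le_one, fun y => ?_⟩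
  rw [Complex.norm_exp, one_mul]
  apply Real.exp_le_exp.2
  calc (z * y).re ≤ ‖z * y‖ := Complex.re_le_norm _
    _ = _ := by simp

lemma Gr.hermite : ∀ n, Gr (fun y => (physHermite n y : ℂ))
  | 0 => by simpa [physHermite] using Gr.const 1
  | 1 => by simpa [physHermite] using (Gr.const 2).mul Gr.id
  | n + 2 => by
    have h := (((Gr.const 2).mul Gr.id).mul (Gr.hermite (n+1))).sub
      ((Gr.const (2 * ((n:ℂ) + 1))).mul (Gr.hermite n))
    simpa [physHermite] using h

lemma Gr.integrable {f : ℝ → ℂ} (hf : Gr f) :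
    Integrable (fun y : ℝ => f y * Complex.exp (-(y:ℂ) ^ 2)) := by
  obtain ⟨hf, C, a, hC, h⟩ := hf
  have hg : Integrable (fun y : ℝ => C * Real.exp (a ^ 2 / 2) * Real.exp (-(1/2) * y ^ 2)) :=
    (integrable_exp_neg_mul_sq (by norm_num)).const_mul _
  refine hg.mono' ?_ (Filter.Eventually.of_forall fun y => ?_)
  · exact (hf.mul (by fun_prop)).aestronglyMeasurable
  · rw [norm_mul, Complex.norm_exp]
    have : (-(y:ℂ) ^ 2).re = - y ^ 2 := by norm_cast
    rw [this]
    calc ‖f y‖ * Real.exp (-y ^ 2) ≤ C * Real.exp (a * |y|) * Real.exp (-y^2) := by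
          gcongr; exact h y
      _ = C * Real.exp (a * |y| - y ^ 2) := by
          rw [mul_assoc, ← Real.exp_add]; ring_nf
      _ ≤ C * Real.exp (a ^ 2 / 2 + -(1/2) * y ^ 2) := by
          gcongr
          nlinarith [sq_nonneg (a - |y|), sq_abs y]
      _ = _ := by rw [Real.exp_add]; ring

/-- derivative of Hermite -/
def physH' (n : ℕ) (x : ℝ) : ℝ := 2 * x * physHermite n x - physHermite (n + 1) x

lemma physH'_succ (n : ℕ) (x : ℝ) : physH' (n + 1) x = 2 * (n + 1) * physHermite n x := by
  simp [physH', physHermite]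

lemma physH_deriv : ∀ n x, HasDerivAt (physHermite n) (physH' n x) x
  | 0, x => by simpa [physHermite, physH'] using hasDerivAt_const x (1:ℝ)
  | 1, x => by
    have : HasDerivAt (fun x : ℝ => 2 * x) (2 * 1) x := (hasDerivAt_id x).const_mul 2
    rw [physH'_succ]
    simpa [physHermite] using this
  | n + 2, x => by
    have h1 := physH_deriv n x
    have h2 := physH_deriv (n+1) x
    have h3 : HasDerivAt (fun x : ℝ => 2 * x) (2 * 1) x := (hasDerivAt_id x).const_mul 2
    have := (h3.mul h2).sub (h1.const_mul (2 * ((n:ℝ) + 1)))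
    rw [physH'_succ]
    refine HasDerivAt.congr_deriv (f := physHermite (n + 2)) this ?_
    rw [physH'_succ, physH']
    push_cast
    ring

lemma ibp {F F' : ℝ → ℂ} (hF : Gr F) (hF' : Gr F') (hd : ∀ y, HasDerivAt F (F' y) y) (n : ℕ) :
    ∫ y : ℝ, F y * physHermite (n + 1) y * Complex.exp (-(y:ℂ) ^ 2)
      = ∫ y : ℝ, F' y * physHermite n y * Complex.exp (-(y:ℂ) ^ 2) := by
  have i1 := (hF.mul (Gr.hermite (n+1))).integrable
  have i2 := (hF'.mul (Gr.hermite n)).integrable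
  have i3 := (hF.mul (Gr.hermite n)).integrable
  have key := integral_eq_zero_of_hasDerivAt_of_integrable
    (f := fun y : ℝ => F y * physHermite n y * Complex.exp (-(y:ℂ) ^ 2))
    (f' := fun y : ℝ => F' y * physHermite n y * Complex.exp (-(y:ℂ) ^ 2)
      - F y * physHermite (n + 1) y * Complex.exp (-(y:ℂ) ^ 2)) ?_ (i2.sub i1) i3
  · rw [integral_sub i2 i1, sub_eq_zero] at key
    exact key.symm
  · intro y
    have e : HasDerivAt (fun y : ℝ => Complex.exp (-(y:ℂ) ^ 2))
        (Complex.exp (-(y:ℂ) ^ 2) * (-(2 * y))) y := by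
      have := ((Complex.ofRealCLM.hasDerivAt (x := y)).pow 2).neg.cexp
      simpa using this
    have := ((hd y).mul (physH_deriv n y).ofReal_comp).mul e
    refine this.congr_deriv ?_
    simp only [Pi.mul_apply, physH', Complex.ofReal_sub, Complex.ofReal_mul, Complex.ofReal_ofNat]
    ring

lemma gauss_lap (z : ℂ) : ∫ y : ℝ, Complex.exp (z * y) * Complex.exp (-(y:ℂ) ^ 2)
    = (Real.sqrt Real.pi : ℂ) * Complex.exp (z ^ 2 / 4) := by
  have := integral_cexp_quadratic (b := -1) (by simp) z 0
  rw [← Complex.ofReal_one] at *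
  simp_rw [← Complex.exp_add]
  convert this using 1
  · congr 1; ext y; congr 1; push_cast; ring
  · congr 1
    · rw [Real.sqrt_eq_rpow, Complex.ofReal_cpow Real.pi_pos.le]
      simp
    · congr 1; push_cast; ring

lemma coef_int (z : ℂ) : ∀ n : ℕ,
    ∫ y : ℝ, Complex.exp (z * y) * physHermite n y * Complex.exp (-(y:ℂ) ^ 2)
    = z ^ n * ((Real.sqrt Real.pi : ℂ) * Complex.exp (z ^ 2 / 4))
  | 0 => by simpa [physHermite] using gauss_lap z
  | n + 1 => by
    rw [ibp (F' := fun y : ℝ => z * Complex.exp (z * y)) (Gr.cexp z) ((Gr.const z).mul (Gr.cexp z))]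
    · simp_rw [mul_assoc z]
      rw [integral_const_mul, coef_int z n]
      ring
    · intro y
      have := ((Complex.ofRealCLM.hasDerivAt (x := y)).const_mul z).cexp
      simpa [mul_comm] using this

lemma orth_int : ∀ m n : ℕ,
    ∫ y : ℝ, (physHermite m y : ℂ) * physHermite n y * Complex.exp (-(y:ℂ) ^ 2)
    = if m = n then (2 ^ n * n.factorial : ℂ) * Real.sqrt Real.pi else 0
  | 0, n => by
    have := coef_int 0 n
    simp only [zero_mul, Complex.exp_zero] at this
    simp only [physHermite, Complex.ofReal_one, this]
    rcases n with _ | n <;> simp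
  | m + 1, 0 => by
    have := coef_int 0 (m+1)
    simp only [zero_mul, Complex.exp_zero, one_mul] at this
    simp only [show ∀ y, physHermite 0 y = 1 from fun _ => rfl, Complex.ofReal_one, mul_one, this]
    simp
  | m + 1, n + 1 => by
    have hd : ∀ y : ℝ, HasDerivAt (fun y => (physHermite (m+1) y : ℂ))
        (2 * ((m:ℂ) + 1) * physHermite m y) y := by
      intro y
      have := (physH_deriv (m+1) y).ofReal_comp
      rw [physH'_succ] at this
      simpa using this
    rw [ibp (Gr.hermite _) ((Gr.const _).mul (Gr.hermite m)) hd]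
    simp_rw [mul_assoc (2 * ((m:ℂ) + 1))]
    rw [integral_const_mul]
    have := orth_int m n
    rw [this]
    by_cases h : m = n
    · subst h
      simp [Nat.factorial_succ]; ring
    · simp [h]

lemma tail_bound (l : ℝ) (hl : 0 ≤ l) (N : ℕ) :
    Real.exp l - ∑ n ∈ Finset.range (N + 1), l ^ n / n.factorial ≤ (1/2) ^ N * Real.exp (2 * l) := by
  have h1 : HasSum (fun n : ℕ => l ^ n / n.factorial) (Real.exp l) := by
    rw [Real.exp_eq_exp_ℝ]; exact NormedSpace.expSeries_div_hasSum_exp l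
  have h2 : HasSum (fun n : ℕ => (2 * l) ^ n / n.factorial) (Real.exp (2 * l)) := by
    rw [Real.exp_eq_exp_ℝ]; exact NormedSpace.expSeries_div_hasSum_exp (2 * l)
  have h3 := (h2.mul_left ((1/2:ℝ) ^ N)).sub h1
  have h4 := sum_le_hasSum (Finset.range (N+1)) ?_ h3
  · rw [Finset.sum_sub_distrib] at h4
    have : 0 ≤ ∑ n ∈ Finset.range (N+1), (1/2:ℝ) ^ N * ((2 * l) ^ n / n.factorial) :=
      Finset.sum_nonneg fun n _ => by positivity
    linarith
  · intro n hn
    have hn : N ≤ n := by simp at hn; omega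
    have : (1:ℝ) ≤ (1/2) ^ N * 2 ^ n := by
      obtain ⟨k, rfl⟩ := Nat.exists_eq_add_of_le hn
      rw [pow_add, ← mul_assoc, ← mul_pow]
      norm_num
      exact one_le_pow₀ (by norm_num)
    have h5 : 0 ≤ l ^ n / n.factorial := by positivity
    have : (1/2:ℝ) ^ N * ((2 * l) ^ n / n.factorial) = ((1/2) ^ N * 2 ^ n) * (l ^ n / n.factorial) := by
      rw [mul_pow]; ring
    rw [this]
    nlinarith

def hK (n : ℕ) : ℝ := (Real.sqrt (Real.sqrt Real.pi))⁻¹ * (Real.sqrt (2 ^ n * Nat.factorial n))⁻¹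

lemma hK_sq (n : ℕ) : hK n ^ 2 = (Real.sqrt Real.pi)⁻¹ * ((2:ℝ) ^ n * n.factorial)⁻¹ := by
  rw [hK, mul_pow, inv_pow, inv_pow, Real.sq_sqrt (by positivity), Real.sq_sqrt (by positivity)]

lemma sH_eq (n : ℕ) (y : ℝ) : scaledHermite 1 n y = hK n * Real.exp (-y ^ 2 / 2) * physHermite n y := by
  simp [scaledHermite, hermiteFun, hK]

lemma gks_sH (k s : ℝ) (n : ℕ) (y : ℝ) : gks k s y * (scaledHermite 1 n y : ℂ)
    = (hK n * Complex.exp (-(s:ℂ) ^ 2 / 2)) *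
      (Complex.exp ((s + Complex.I * k) * y) * physHermite n y * Complex.exp (-(y:ℂ) ^ 2)) := by
  rw [sH_eq, gks]
  push_cast
  have : Complex.exp (-((y : ℂ) - (s : ℂ)) ^ 2 / 2 + Complex.I * (k : ℂ) * (y : ℂ))
      * Complex.exp (-(y:ℂ) ^ 2 / 2) = Complex.exp (-(s:ℂ) ^ 2 / 2) *
      Complex.exp ((s + Complex.I * k) * y) * Complex.exp (-(y:ℂ) ^ 2) := by
    rw [← Complex.exp_add, ← Complex.exp_add, ← Complex.exp_add]
    congr 1; ring
  linear_combination (hK n : ℂ) * physHermite n y * this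

lemma gks_sH_int (k s : ℝ) (n : ℕ) : Integrable (fun y => gks k s y * (scaledHermite 1 n y : ℂ)) := by
  simp_rw [gks_sH]
  exact ((Gr.cexp _).mul (Gr.hermite n)).integrable.const_mul _

lemma coef_eq (k s : ℝ) (n : ℕ) : ∫ y : ℝ, gks k s y * (scaledHermite 1 n y : ℂ)
    = (hK n * Complex.exp (-(s:ℂ) ^ 2 / 2)) * ((s + Complex.I * k) ^ n *
      ((Real.sqrt Real.pi : ℂ) * Complex.exp ((s + Complex.I * k) ^ 2 / 4))) := by
  simp_rw [gks_sH]
  rw [integral_const_mul, coef_int]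

lemma coef_norm (k s : ℝ) (n : ℕ) : ‖∫ y : ℝ, gks k s y * (scaledHermite 1 n y : ℂ)‖ ^ 2
    = Real.sqrt Real.pi * Real.exp (-((s ^ 2 + k ^ 2) / 2)) *
      (((s ^ 2 + k ^ 2) / 2) ^ n / n.factorial) := by
  rw [coef_eq]
  simp only [norm_mul, norm_pow, mul_pow, Complex.norm_exp, Complex.norm_real, Real.norm_eq_abs, sq_abs]
  have hz : ‖(s + Complex.I * k : ℂ)‖ ^ 2 = s ^ 2 + k ^ 2 := by
    rw [← Complex.normSq_eq_norm_sq, Complex.normSq_apply]; simp; ring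
  have h1 : (-(s:ℂ) ^ 2 / 2).re = - s ^ 2 / 2 := by norm_cast
  have h2 : ((s + Complex.I * k : ℂ) ^ 2 / 4).re = (s ^ 2 - k ^ 2) / 4 := by
    have : (s + Complex.I * k : ℂ) ^ 2 / 4 = (((s ^ 2 - k ^ 2) / 4 : ℝ) : ℂ)
        + ((s * k / 2 : ℝ) : ℂ) * Complex.I := by
      push_cast
      linear_combination (k:ℂ)^2 / 4 * Complex.I_sq
    rw [this, Complex.add_re, Complex.ofReal_re, Complex.re_ofReal_mul]; simp
  rw [h1, h2, ← pow_mul, mul_comm n 2, pow_mul, hz, hK_sq, ← Real.exp_nat_mul, ← Real.exp_nat_mul,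
    Real.sq_sqrt (by positivity), div_pow]
  have h3 : Real.exp (-((s ^ 2 + k ^ 2) / 2)) = Real.exp ((2:ℕ) * (-s ^ 2 / 2)) *
      Real.exp ((2:ℕ) * ((s ^ 2 - k ^ 2) / 4)) := by
    rw [← Real.exp_add]; congr 1; push_cast; ring
  rw [h3]
  have hp : Real.pi = Real.sqrt Real.pi * Real.sqrt Real.pi := (Real.mul_self_sqrt (by positivity)).symm
  have hp0 : Real.sqrt Real.pi ≠ 0 := by positivity
  rw [show ∀ a b c e : ℝ, a * b * (c * (Real.pi * e)) = (a * Real.pi) * b * c * e by intros; ring]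
  nth_rewrite 2 [hp]
  field_simp

lemma sH_sH (m n : ℕ) (y : ℝ) : (scaledHermite 1 m y : ℂ) * (scaledHermite 1 n y : ℂ)
    = (hK m * hK n) * (physHermite m y * physHermite n y * Complex.exp (-(y:ℂ) ^ 2)) := by
  rw [sH_eq, sH_eq]
  push_cast
  have : Complex.exp (-(y:ℂ) ^ 2 / 2) * Complex.exp (-(y:ℂ) ^ 2 / 2) = Complex.exp (-(y:ℂ) ^ 2) := by
    rw [← Complex.exp_add]; congr 1; ring
  rw [← this]; ring

lemma sH_sH_int (m n : ℕ) :
    Integrable (fun y => (scaledHermite 1 m y : ℂ) * (scaledHermite 1 n y : ℂ)) := by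
  simp_rw [sH_sH]
  exact ((Gr.hermite m).mul (Gr.hermite n)).integrable.const_mul _

lemma sH_orth (m n : ℕ) : ∫ y, (scaledHermite 1 m y : ℂ) * (scaledHermite 1 n y : ℂ)
    = if m = n then 1 else 0 := by
  simp_rw [sH_sH]
  rw [integral_const_mul, orth_int]
  by_cases h : m = n
  · subst h
    have := hK_sq m
    have h2 : hK m * hK m * (2 ^ m * m.factorial * Real.sqrt Real.pi) = 1 := by
      rw [← sq, this]
      have hp0 : Real.sqrt Real.pi ≠ 0 := by positivity
      have : (m.factorial : ℝ) ≠ 0 := by positivity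
      field_simp
    simp only [if_true]
    exact_mod_cast h2
  · simp [h]

lemma gks_conj (k s y : ℝ) : gks k s y * (starRingEnd ℂ) (gks k s y)
    = ((Real.exp (-1 * (y - s) ^ 2) : ℝ) : ℂ) := by
  rw [Complex.mul_conj, Complex.normSq_eq_norm_sq, gks, Complex.norm_exp, ← Real.exp_nat_mul]
  congr 2
  have : (-((y : ℂ) - (s : ℂ)) ^ 2 / 2 + Complex.I * (k : ℂ) * (y : ℂ))
     = ((-(y - s) ^ 2 / 2 : ℝ) : ℂ) + ((k * y : ℝ) : ℂ) * Complex.I := by push_cast; ring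
  rw [this, Complex.add_re, Complex.ofReal_re, Complex.re_ofReal_mul]; simp; ring

lemma gks_conj_int (k s : ℝ) : Integrable (fun y => gks k s y * (starRingEnd ℂ) (gks k s y)) := by
  simp_rw [gks_conj]
  exact ((integrable_exp_neg_mul_sq one_pos).comp_sub_right s).ofReal

lemma gks_norm (k s : ℝ) : ∫ y, gks k s y * (starRingEnd ℂ) (gks k s y) = (Real.sqrt Real.pi : ℂ) := by
  simp_rw [gks_conj]
  rw [integral_complex_ofReal, integral_sub_right_eq_self (fun y => Real.exp (-1 * y ^ 2)) s, integral_gaussian]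
  simp

/-- finite Pythagoras -/
lemma pyth {ι : Type*} (S : Finset ι) [DecidableEq ι] (g : ℝ → ℂ) (h : ι → ℝ → ℝ) (A : ℝ)
    (i1 : Integrable (fun y => g y * (starRingEnd ℂ) (g y)))
    (i2 : ∀ n, Integrable (fun y => g y * (h n y : ℂ)))
    (i3 : ∀ m n, Integrable (fun y => (h m y : ℂ) * (h n y : ℂ)))
    (e1 : ∫ y, g y * (starRingEnd ℂ) (g y) = (A : ℂ))
    (e3 : ∀ m n, ∫ y, (h m y : ℂ) * (h n y : ℂ) = if m = n then 1 else 0) :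
    ∫ x, ‖g x - ∑ n ∈ S, (∫ y, g y * (h n y : ℂ)) * (h n x : ℂ)‖ ^ 2
      = A - ∑ n ∈ S, ‖∫ y, g y * (h n y : ℂ)‖ ^ 2 := by
  set c : ι → ℂ := fun n => ∫ y, g y * (h n y : ℂ) with hc
  change ∫ x, ‖g x - ∑ n ∈ S, c n * (h n x : ℂ)‖ ^ 2 = A - ∑ n ∈ S, ‖c n‖ ^ 2
  have i2' : ∀ n, Integrable (fun y => (starRingEnd ℂ) (g y) * (h n y : ℂ)) := by
    intro n
    have := (Complex.conjCLE.toContinuousLinearMap.integrable_comp (i2 n))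
    simpa using this
  have e2' : ∀ n, ∫ y, (starRingEnd ℂ) (g y) * (h n y : ℂ) = (starRingEnd ℂ) (c n) := by
    intro n
    rw [hc]
    simp only
    rw [← integral_conj]
    simp
  rw [← Complex.ofReal_inj, ← integral_complex_ofReal]
  have hpt : ∀ x, ((‖g x - ∑ n ∈ S, c n * (h n x : ℂ)‖ ^ 2 : ℝ) : ℂ)
      = g x * (starRingEnd ℂ) (g x) - ∑ n ∈ S, (starRingEnd ℂ) (c n) * (g x * (h n x : ℂ))
        - ∑ n ∈ S, c n * ((starRingEnd ℂ) (g x) * (h n x : ℂ))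
        + ∑ m ∈ S, ∑ n ∈ S, (c m * (starRingEnd ℂ) (c n)) * ((h m x : ℂ) * (h n x : ℂ)) := by
    intro x
    rw [← Complex.normSq_eq_norm_sq, ← Complex.mul_conj, map_sub, map_sum]
    simp only [map_mul, Complex.conj_ofReal]
    have a1 : ∑ n ∈ S, (starRingEnd ℂ) (c n) * (g x * (h n x : ℂ))
        = g x * ∑ n ∈ S, (starRingEnd ℂ) (c n) * (h n x : ℂ) := by
      rw [Finset.mul_sum]; exact Finset.sum_congr rfl fun _ _ => by ring
    have a2 : ∑ n ∈ S, c n * ((starRingEnd ℂ) (g x) * (h n x : ℂ))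
        = (starRingEnd ℂ) (g x) * ∑ n ∈ S, c n * (h n x : ℂ) := by
      rw [Finset.mul_sum]; exact Finset.sum_congr rfl fun _ _ => by ring
    have a3 : ∑ m ∈ S, ∑ n ∈ S, (c m * (starRingEnd ℂ) (c n)) * ((h m x : ℂ) * (h n x : ℂ))
        = (∑ n ∈ S, c n * (h n x : ℂ)) * ∑ n ∈ S, (starRingEnd ℂ) (c n) * (h n x : ℂ) := by
      rw [Finset.sum_mul_sum]
      exact Finset.sum_congr rfl fun _ _ => Finset.sum_congr rfl fun _ _ => by ring
    rw [a1, a2, a3]; ring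
  simp_rw [hpt]
  have j2 : Integrable (fun x => ∑ n ∈ S, (starRingEnd ℂ) (c n) * (g x * (h n x : ℂ))) :=
    integrable_finsetSum _ fun n _ => (i2 n).const_mul _
  have j3 : Integrable (fun x => ∑ n ∈ S, c n * ((starRingEnd ℂ) (g x) * (h n x : ℂ))) :=
    integrable_finsetSum _ fun n _ => (i2' n).const_mul _
  have j4 : Integrable (fun x =>
      ∑ m ∈ S, ∑ n ∈ S, (c m * (starRingEnd ℂ) (c n)) * ((h m x : ℂ) * (h n x : ℂ))) :=
    integrable_finsetSum _ fun m _ => integrable_finsetSum _ fun n _ => (i3 m n).const_mul _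
  have j12 : Integrable (fun x => g x * (starRingEnd ℂ) (g x)
      - ∑ n ∈ S, (starRingEnd ℂ) (c n) * (g x * (h n x : ℂ))) := i1.sub j2
  have j123 : Integrable (fun x => g x * (starRingEnd ℂ) (g x)
      - ∑ n ∈ S, (starRingEnd ℂ) (c n) * (g x * (h n x : ℂ))
      - ∑ n ∈ S, c n * ((starRingEnd ℂ) (g x) * (h n x : ℂ))) := j12.sub j3
  rw [integral_add j123 j4, integral_sub j12 j3, integral_sub i1 j2,
    integral_finsetSum _ fun n _ => (i2 n).const_mul _,
    integral_finsetSum _ fun n _ => (i2' n).const_mul _,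
    integral_finsetSum _ fun m _ => integrable_finsetSum _ fun n _ => (i3 m n).const_mul _]
  have k4 : ∀ m ∈ S, ∫ x, ∑ n ∈ S, (c m * (starRingEnd ℂ) (c n)) * ((h m x : ℂ) * (h n x : ℂ))
      = c m * (starRingEnd ℂ) (c m) := by
    intro m hm
    rw [integral_finsetSum _ fun n _ => (i3 m n).const_mul _]
    simp_rw [integral_const_mul, e3]
    simp [hm]
  rw [Finset.sum_congr rfl k4]
  simp_rw [integral_const_mul, e1, e2']
  have k2 : ∀ n, (starRingEnd ℂ) (c n) * ∫ x, g x * (h n x : ℂ) = c n * (starRingEnd ℂ) (c n) := by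
    intro n; rw [mul_comm]
  simp_rw [k2]
  push_cast
  simp_rw [Complex.mul_conj, Complex.normSq_eq_norm_sq]
  push_cast
  ring

lemma err_bound (k s : ℝ) (N : ℕ) :
    (L2norm (fun x => gks k s x - hermiteProj 1 N (gks k s) x)) ^ 2
      ≤ Real.sqrt Real.pi * ((1/2) ^ N * Real.exp ((s ^ 2 + k ^ 2) / 2)) := by
  rw [L2norm, Real.sq_sqrt (integral_nonneg fun x => by positivity)]
  simp only [hermiteProj]
  rw [pyth (Finset.range (N+1)) (gks k s) (scaledHermite 1) (Real.sqrt Real.pi) (gks_conj_int k s)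
    (gks_sH_int k s) sH_sH_int (gks_norm k s) sH_orth]
  simp_rw [coef_norm]
  rw [← Finset.mul_sum]
  set l := (s ^ 2 + k ^ 2) / 2
  have hl : 0 ≤ l := by positivity
  have := tail_bound l hl N
  have e0 : Real.exp (-l) * Real.exp l = 1 := by rw [← Real.exp_add]; simp
  have e2 : Real.exp (2 * l) = Real.exp l * Real.exp l := by rw [← Real.exp_add]; ring_nf
  have h1 := mul_le_mul_of_nonneg_left this
    (mul_nonneg (Real.sqrt_nonneg Real.pi) (Real.exp_pos (-l)).le)
  rw [e2] at h1
  calc _ = Real.sqrt Real.pi * Real.exp (-l) *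
        (Real.exp l - ∑ n ∈ Finset.range (N + 1), l ^ n / n.factorial) := by
        linear_combination (-Real.sqrt Real.pi) * e0
    _ ≤ _ := h1
    _ = _ := by linear_combination (Real.sqrt Real.pi * (1/2)^N * Real.exp l) * e0
/-- With `M = B = √N/(2√2)` and `Ω = {(k,s) : |k| ≤ B, |s| ≤ 2M}`,
`∫_Ω ‖g_{k,s} − Π̂_N g_{k,s}‖² dk ds ≤ C N^{-1/2} e^{-N/8}`. -/
theorem gks_proj_error_integral :
    ∃ C : ℝ, 0 < C ∧ ∀ N : ℕ, 1 ≤ N →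
      (∫ k in (-(Real.sqrt N / (2 * Real.sqrt 2)))..(Real.sqrt N / (2 * Real.sqrt 2)),
        ∫ s in (-(2 * (Real.sqrt N / (2 * Real.sqrt 2))))..(2 * (Real.sqrt N / (2 * Real.sqrt 2))),
          (L2norm (fun x => gks k s x - hermiteProj 1 N (gks k s) x)) ^ 2)
        ≤ C * (N : ℝ) ^ (-(1 : ℝ) / 2) * Real.exp (-(N : ℝ) / 8) := by
  refine ⟨64, by norm_num, fun N hN => ?_⟩
  set B := Real.sqrt N / (2 * Real.sqrt 2) with hB
  have hB0 : 0 ≤ B := by positivity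
  have hN' : (1:ℝ) ≤ N := by exact_mod_cast hN
  have hB2 : B ^ 2 = N / 8 := by
    rw [hB, div_pow, mul_pow, Real.sq_sqrt (by positivity), Real.sq_sqrt (by positivity)]
    norm_num
  set D := Real.sqrt Real.pi * ((1/2) ^ N * Real.exp (5 * N / 16)) with hD
  have hpt : ∀ k s : ℝ, |k| ≤ B → |s| ≤ 2 * B →
      ‖(L2norm (fun x => gks k s x - hermiteProj 1 N (gks k s) x)) ^ 2‖ ≤ D := by
    intro k s hk hs
    rw [Real.norm_of_nonneg (by positivity)]
    refine (err_bound k s N).trans ?_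
    have h1 : k ^ 2 ≤ N / 8 := by rw [← hB2, ← sq_abs k]; gcongr
    have h2 : s ^ 2 ≤ N / 2 := by
      have : s ^ 2 ≤ (2 * B) ^ 2 := by rw [← sq_abs s]; gcongr
      rw [mul_pow, hB2] at this; linarith
    have h3 : (s ^ 2 + k ^ 2) / 2 ≤ 5 * N / 16 := by linarith
    rw [hD]
    have := Real.exp_le_exp.2 h3
    gcongr
  have habs : ∀ (b x : ℝ), 0 ≤ b → x ∈ Set.uIoc (-b) b → |x| ≤ b := by
    intro b x hb hx
    rw [Set.uIoc_of_le (by linarith)] at hx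
    exact abs_le.2 ⟨hx.1.le, hx.2⟩
  have hin : ∀ k ∈ Set.uIoc (-B) B, ‖∫ s in (-(2 * B))..(2 * B),
      (L2norm (fun x => gks k s x - hermiteProj 1 N (gks k s) x)) ^ 2‖ ≤ D * |2 * B - -(2 * B)| :=
    fun k hk => intervalIntegral.norm_integral_le_of_norm_le_const fun s hs =>
      hpt k s (habs B k hB0 hk) (habs (2 * B) s (by positivity) hs)
  have hout := intervalIntegral.norm_integral_le_of_norm_le_const hin
  refine (le_abs_self _).trans (hout.trans ?_)
  rw [abs_of_nonneg (by linarith), abs_of_nonneg (by linarith)]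
  have e1 : D * (2 * B - -(2 * B)) * (B - -B) = D * N := by
    linear_combination 8 * D * hB2
  rw [e1, hD]
  have hpi : Real.sqrt Real.pi ≤ 2 := by
    rw [Real.sqrt_le_left (by norm_num)]; linarith [Real.pi_le_four]
  have hhalf : (1/2 : ℝ) ^ N ≤ Real.exp (-(11/16) * N) := by
    have h2 : (1/2 : ℝ) ≤ Real.exp (-(11/16)) := by
      rw [← Real.log_le_iff_le_exp (by norm_num)]
      rw [one_div, Real.log_inv]
      linarith [Real.log_two_gt_d9]
    calc (1/2 : ℝ) ^ N ≤ Real.exp (-(11/16)) ^ N := by gcongr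
      _ = _ := by rw [← Real.exp_nat_mul]; ring_nf
  have hrp : (N:ℝ)⁻¹ ≤ (N : ℝ) ^ (-(1 : ℝ) / 2) := by
    rw [← Real.rpow_neg_one]
    exact Real.rpow_le_rpow_of_exponent_le hN' (by norm_num)
  have hquad : (N:ℝ) ^ 2 / 32 ≤ Real.exp (N / 4) := by
    have := Real.quadratic_le_exp_of_nonneg (x := (N:ℝ) / 4) (by positivity)
    nlinarith
  have hN0 : (0:ℝ) < N := by linarith
  calc Real.sqrt Real.pi * ((1/2) ^ N * Real.exp (5 * N / 16)) * N
      ≤ 2 * (Real.exp (-(11/16) * N) * Real.exp (5 * N / 16)) * N := by gcongr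
    _ = 64 * (N:ℝ)⁻¹ * ((N:ℝ) ^ 2 / 32 * Real.exp (-(3/8) * N)) := by
        rw [← Real.exp_add, show -(11/16) * (N:ℝ) + 5 * N / 16 = -(3/8) * N by ring]
        field_simp; norm_num
    _ ≤ 64 * (N : ℝ) ^ (-(1 : ℝ) / 2) * (Real.exp (N / 4) * Real.exp (-(3/8) * N)) := by gcongr
    _ = _ := by
        rw [← Real.exp_add]; congr 2; ring
end
end
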